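/- Fix positive reals p₋₁, p₀, p₁ with p₁ = p₋₁ (zero drift), and let P(1) = p₋₁ + p₀ + p₁ and P″(1) = 2p₋₁. Let w_{n,k} denote the total weight of Motzkin walks of length n having exactly k returns to zero. Then, with σ = √(P(1)/P″(1)), the number of returns to zero rescaled by √n converges in distribution to the half-normal law H(σ): for every real x ≥ 0, lim_{n→∞} (Σ_{k ≤ x√n} w_{n,k})/P(1)ⁿ = ∫_0^x √(2/(πσ²)) · exp(−t²/(2σ²)) dt. -/

import Mathlib

open scoped BigOperators Classical

/-- Value of a step encoded by `Fin 3`: `0 ↦ -1`, `1 ↦ 0`, `2 ↦ +1`. -/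
def stepVal (s : Fin 3) : ℤ := (s : ℤ) - 1

/-- Weight of a single step: `p₋₁` for `-1`, `p₀` for `0`, `p₁` for `+1`. -/
def stepWeight (pm p0 p1 : ℝ) (s : Fin 3) : ℝ :=
  if s = 0 then pm else if s = 1 then p0 else p1

/-- Weight of a Motzkin walk (product of its step weights). -/
def walkWeight (pm p0 p1 : ℝ) {n : ℕ} (w : Fin n → Fin 3) : ℝ :=
  ∏ i, stepWeight pm p0 p1 (w i)

/-- Partial sum `ω_j` of the walk `w`. -/
def psum {n : ℕ} (w : Fin n → Fin 3) (j : ℕ) : ℤ :=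
  ∑ i ∈ Finset.univ.filter (fun i : Fin n => (i : ℕ) < j), stepVal (w i)

/-- Total weight of Motzkin bridges of length `n`. -/
noncomputable def bridgeW (pm p0 p1 : ℝ) (n : ℕ) : ℝ :=
  ∑ w ∈ Finset.univ.filter (fun w : Fin n → Fin 3 => psum w n = 0),
    walkWeight pm p0 p1 w

/-- Number of returns to zero of a walk of length `n`. -/
def retZero {n : ℕ} (w : Fin n → Fin 3) : ℕ :=
  ((Finset.Icc 1 n).filter (fun j => psum w j = 0)).card

/-- Total weight of walks of length `n` with exactly `k` returns to zero. -/
noncomputable def walkRetW (pm p0 p1 : ℝ) (n k : ℕ) : ℝ :=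
  ∑ w ∈ Finset.univ.filter (fun w : Fin n → Fin 3 => retZero w = k),
    walkWeight pm p0 p1 w

/-- Number of sign changes of a walk of length `n`. -/
def signChanges {n : ℕ} (w : Fin n → Fin 3) : ℕ :=
  (((Finset.range (n+1)) ×ˢ (Finset.range (n+1))).filter
    (fun p => p.1 < p.2 ∧ psum w p.1 * psum w p.2 < 0 ∧
      ∀ l ∈ Finset.Ioo p.1 p.2, psum w l = 0)).card

/-- Total weight of bridges of length `n` with exactly `k` sign changes. -/
noncomputable def bridgeSignW (pm p0 p1 : ℝ) (n k : ℕ) : ℝ :=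
  ∑ w ∈ Finset.univ.filter
      (fun w : Fin n → Fin 3 => psum w n = 0 ∧ signChanges w = k),
    walkWeight pm p0 p1 w

/-- Total weight of positive excursions of length `n`. -/
noncomputable def posExcW (pm p0 p1 : ℝ) (n : ℕ) : ℝ :=
  ∑ w ∈ Finset.univ.filter
      (fun w : Fin n → Fin 3 => psum w n = 0 ∧ ∀ j ∈ Finset.range (n+1), 0 ≤ psum w j),
    walkWeight pm p0 p1 w

/-- Total weight of negative excursions of length `n`. -/
noncomputable def negExcW (pm p0 p1 : ℝ) (n : ℕ) : ℝ :=
  ∑ w ∈ Finset.univ.filter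
      (fun w : Fin n → Fin 3 => psum w n = 0 ∧ ∀ j ∈ Finset.range (n+1), psum w j ≤ 0),
    walkWeight pm p0 p1 w

/-- A positive bridge: a bridge whose last nonzero partial sum is positive. -/
def IsPosBridge {n : ℕ} (w : Fin n → Fin 3) : Prop :=
  psum w n = 0 ∧ ∃ j ∈ Finset.range (n+1),
    0 < psum w j ∧ ∀ l ∈ Finset.Ioc j n, psum w l = 0

/-- A negative bridge: a bridge whose last nonzero partial sum is negative. -/
def IsNegBridge {n : ℕ} (w : Fin n → Fin 3) : Prop :=
  psum w n = 0 ∧ ∃ j ∈ Finset.range (n+1),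
    psum w j < 0 ∧ ∀ l ∈ Finset.Ioc j n, psum w l = 0

instance {n : ℕ} (w : Fin n → Fin 3) : Decidable (IsPosBridge w) := by
  unfold IsPosBridge; infer_instance

instance {n : ℕ} (w : Fin n → Fin 3) : Decidable (IsNegBridge w) := by
  unfold IsNegBridge; infer_instance

/-- Total weight of positive bridges of length `n` with `k` sign changes. -/
noncomputable def posBridgeSignW (pm p0 p1 : ℝ) (n k : ℕ) : ℝ :=
  ∑ w ∈ Finset.univ.filter
      (fun w : Fin n → Fin 3 => IsPosBridge w ∧ signChanges w = k),
    walkWeight pm p0 p1 w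

/-- Total weight of negative bridges of length `n` with `k` sign changes. -/
noncomputable def negBridgeSignW (pm p0 p1 : ℝ) (n k : ℕ) : ℝ :=
  ∑ w ∈ Finset.univ.filter
      (fun w : Fin n → Fin 3 => IsNegBridge w ∧ signChanges w = k),
    walkWeight pm p0 p1 w

/-- Total weight of walks of length `n` with `k` sign changes. -/
noncomputable def walkSignW (pm p0 p1 : ℝ) (n k : ℕ) : ℝ :=
  ∑ w ∈ Finset.univ.filter (fun w : Fin n → Fin 3 => signChanges w = k),
    walkWeight pm p0 p1 w

/-- Height of a walk of length `n` (as a natural number; it is `max_j ω_j ≥ 0`). -/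
def height {n : ℕ} (w : Fin n → Fin 3) : ℕ :=
  (Finset.range (n+1)).sup (fun j => (psum w j).toNat)

/-- Total weight of walks of length `n` of height exactly `h`. -/
noncomputable def heightW (pm p0 p1 : ℝ) (n h : ℕ) : ℝ :=
  ∑ w ∈ Finset.univ.filter (fun w : Fin n → Fin 3 => height w = h),
    walkWeight pm p0 p1 w

/-! ### Weighted counts of walks by number of visits to zero -/

/-- The operator `F ↦ (y ↦ a F(y-1) + b F(y) + c F(y+1))`. -/
def triOp {E : Type*} [AddCommGroup E] [Module ℝ E] (a b c : ℝ) (F : ℝ → E) (y : ℝ) : E :=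
  a • F (y - 1) + b • F y + c • F (y + 1)

lemma triOp_commute (a b c a' b' c' : ℝ) :
    Function.Commute (triOp (E := ℝ) a b c) (triOp a' b' c') := by
  intro F
  funext y
  simp only [triOp, smul_eq_mul, sub_add_cancel, add_sub_cancel_right]
  ring

/-- The function equal to `2` on negative reals, `1` at zero and `0` on positive reals. -/
noncomputable def reflIndicator (y : ℝ) : ℝ :=
  (Set.Iic (0 : ℝ)).indicator 1 y + (Set.Iio (0 : ℝ)).indicator 1 y

lemma reflIndicator_of_pos {y : ℝ} (hy : 0 < y) : reflIndicator y = 0 := by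
  simp [reflIndicator, hy, hy.le]

lemma reflIndicator_zero : reflIndicator 0 = 1 := by
  simp [reflIndicator]

lemma reflIndicator_add_neg (y : ℝ) : reflIndicator y + reflIndicator (-y) = 2 := by
  rcases lt_trichotomy y 0 with h | rfl | h
  · rw [reflIndicator_of_pos (neg_pos.2 h)]
    simp [reflIndicator, h, h.le]; norm_num
  · simp [reflIndicator_zero]; norm_num
  · rw [reflIndicator_of_pos h]
    simp [reflIndicator, h, h.le]; norm_num

lemma triOp_iterate_add_neg {a b : ℝ} (h : 2 * a + b = 1) (n : ℕ) (y : ℝ) :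
    (triOp a b a)^[n] reflIndicator y + (triOp a b a)^[n] reflIndicator (-y) = 2 := by
  induction n generalizing y with
  | zero => exact reflIndicator_add_neg y
  | succ n ih =>
    rw [Function.iterate_succ_apply']
    simp only [triOp, smul_eq_mul]
    have h1 := ih (y - 1)
    have h2 := ih (y + 1)
    rw [neg_sub, ← neg_add_eq_sub y 1] at h1
    rw [neg_add, ← sub_eq_add_neg] at h2
    linear_combination a * h1 + b * ih y + a * h2 + 2 * h

lemma triOp_iterate_zero {a b : ℝ} (h : 2 * a + b = 1) (n : ℕ) :
    (triOp a b a)^[n] reflIndicator 0 = 1 := by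
  have := triOp_iterate_add_neg h n 0
  rw [neg_zero] at this
  linarith

lemma triOp_iterate_of_pos (b c : ℝ) (k : ℕ) {y : ℝ} (hy : 0 < y) :
    (triOp 0 b c)^[k] reflIndicator y = 0 := by
  induction k generalizing y with
  | zero => exact reflIndicator_of_pos hy
  | succ k ih =>
    rw [Function.iterate_succ_apply']
    simp [triOp, ih hy, ih (add_pos hy one_pos)]

lemma psum_zero {n : ℕ} (w : Fin n → Fin 3) : psum w 0 = 0 := by
  simp [psum]

lemma psum_cons_succ {n : ℕ} (s : Fin 3) (w : Fin n → Fin 3) (j : ℕ) :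
    psum (Fin.cons s w : Fin (n + 1) → Fin 3) (j + 1) = stepVal s + psum w j := by
  simp [psum, Finset.sum_filter, Fin.sum_univ_succ]

/-- Number of visits to zero at times `0, …, n` of the walk `w` started at height `h`. -/
def visits {n : ℕ} (h : ℤ) (w : Fin n → Fin 3) : ℕ :=
  ((Finset.range (n + 1)).filter (fun j => h + psum w j = 0)).card

lemma visits_cons {n : ℕ} (h : ℤ) (s : Fin 3) (w : Fin n → Fin 3) :
    visits h (Fin.cons s w : Fin (n + 1) → Fin 3) =
      visits (h + stepVal s) w + if h = 0 then 1 else 0 := by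
  simp only [visits, Finset.card_filter]
  rw [Finset.sum_range_succ']
  simp [psum_cons_succ, psum_zero, add_assoc]

lemma visits_zero_eq {n : ℕ} (w : Fin n → Fin 3) : visits 0 w = retZero w + 1 := by
  simp only [visits, retZero, Finset.card_filter]
  rw [Finset.sum_range_succ', Finset.range_eq_Ico,
    Finset.sum_Ico_add' (fun j => if 0 + psum w j = 0 then 1 else 0) 0 n 1]
  simp only [psum_zero, zero_add, if_true]
  rfl

/-- Total weight of walks of length `n` started at `h` visiting zero more than `k` times. -/
noncomputable def visitW (pm p0 p1 : ℝ) (n : ℕ) (h : ℤ) (k : ℕ) : ℝ :=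
  ∑ w : Fin n → Fin 3, if k < visits h w then walkWeight pm p0 p1 w else 0

lemma sum_walkWeight_cons (pm p0 p1 : ℝ) (n : ℕ) (p : (Fin (n + 1) → Fin 3) → Prop)
    [DecidablePred p] :
    (∑ w : Fin (n + 1) → Fin 3, if p w then walkWeight pm p0 p1 w else 0) =
      pm * (∑ w : Fin n → Fin 3, if p (Fin.cons 0 w) then walkWeight pm p0 p1 w else 0) +
      p0 * (∑ w : Fin n → Fin 3, if p (Fin.cons 1 w) then walkWeight pm p0 p1 w else 0) +
      p1 * (∑ w : Fin n → Fin 3, if p (Fin.cons 2 w) then walkWeight pm p0 p1 w else 0) := by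
  rw [← (Fin.consEquiv (fun _ : Fin (n + 1) => Fin 3)).sum_comp, Fintype.sum_prod_type]
  simp [Fin.sum_univ_three, Fin.consEquiv, walkWeight, Fin.prod_univ_succ, stepWeight,
    Finset.mul_sum]

lemma sum_walkWeight (pm p0 p1 : ℝ) (n : ℕ) :
    ∑ w : Fin n → Fin 3, walkWeight pm p0 p1 w = (pm + p0 + p1) ^ n := by
  induction n with
  | zero => simp [walkWeight]
  | succ n ih =>
    have := sum_walkWeight_cons pm p0 p1 n (fun _ => True)
    simp only [if_true, ih] at this
    rw [this]
    ring

lemma visitW_succ (pm p0 p1 : ℝ) (n : ℕ) {h : ℤ} (hh : h ≠ 0) (k : ℕ) :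
    visitW pm p0 p1 (n + 1) h k = pm * visitW pm p0 p1 n (h - 1) k +
      p0 * visitW pm p0 p1 n h k + p1 * visitW pm p0 p1 n (h + 1) k := by
  rw [visitW, sum_walkWeight_cons pm p0 p1 n (fun w => k < visits h w)]
  simp [visitW, visits_cons, hh, stepVal, sub_eq_add_neg]

lemma visitW_succ_zero_succ (pm p0 p1 : ℝ) (n k : ℕ) :
    visitW pm p0 p1 (n + 1) 0 (k + 1) = pm * visitW pm p0 p1 n (-1) k +
      p0 * visitW pm p0 p1 n 0 k + p1 * visitW pm p0 p1 n 1 k := by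
  rw [visitW, sum_walkWeight_cons pm p0 p1 n (fun w => k + 1 < visits 0 w)]
  simp [visitW, visits_cons, stepVal]

lemma visitW_zero_zero (pm p0 p1 : ℝ) (n : ℕ) :
    visitW pm p0 p1 n 0 0 = (pm + p0 + p1) ^ n := by
  simp [visitW, visits_zero_eq, sum_walkWeight]

lemma visitW_length_zero (pm p0 p1 : ℝ) (h : ℤ) (k : ℕ) :
    visitW pm p0 p1 0 h k = if h = 0 ∧ k = 0 then 1 else 0 := by
  by_cases hh : h = 0 <;> by_cases hk : k = 0 <;>
    simp [visitW, visits, psum, walkWeight, hh, hk]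

/-- Closed form for `visitW`: the reflection principle. -/
lemma visitW_eq {a b : ℝ} (hab : 2 * a + b = 1) (P pm p0 : ℝ) (ha : pm = P * a)
    (hb : p0 = P * b) (n : ℕ) (h : ℤ) (k : ℕ) :
    visitW pm p0 pm n h k =
      if k ≤ n then
        P ^ n * (triOp 0 b (2 * a))^[k] ((triOp a b a)^[n - k] reflIndicator) |(h : ℝ)|
      else 0 := by
  have hP : pm + p0 + pm = P := by rw [ha, hb]; linear_combination P * hab
  induction n generalizing h k with
  | zero =>
    rw [visitW_length_zero]
    rcases k with _ | k
    · by_cases hh : h = 0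
      · simp [hh, reflIndicator_zero]
      · have : 0 < |(h : ℝ)| := abs_pos.2 (by exact_mod_cast hh)
        simp [hh, reflIndicator_of_pos this]
    · simp
  | succ n ih =>
    by_cases hh : h = 0
    · subst hh
      rcases k with _ | k
      · rw [visitW_zero_zero, hP]
        simp only [Int.cast_zero, abs_zero, Function.iterate_zero, id_eq, zero_le, if_true,
          triOp_iterate_zero hab, mul_one]
      · rw [visitW_succ_zero_succ, ih, ih, ih]
        by_cases hk : k ≤ n
        · have hk' : k + 1 ≤ n + 1 := by omega
          rw [if_pos hk, if_pos hk, if_pos hk, if_pos hk', Nat.add_sub_add_right,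
            Function.iterate_succ_apply']
          simp only [triOp, Int.cast_neg, Int.cast_one, abs_neg, abs_one, Int.cast_zero, abs_zero,
            zero_add, smul_eq_mul]
          rw [ha, hb]
          ring
        · simp [hk]
    · rw [visitW_succ _ _ _ _ hh, ih, ih, ih]
      have hpos : 0 < |(h : ℝ)| := abs_pos.2 (by exact_mod_cast hh)
      by_cases hk : k ≤ n
      · have hk' : k ≤ n + 1 := by omega
        simp only [if_pos hk, if_pos hk']
        rw [Nat.succ_sub hk, Function.iterate_succ_apply',
          ← ((triOp_commute a b a 0 b (2 * a)).iterate_right k).eq]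
        set G := (triOp 0 b (2 * a))^[k] ((triOp a b a)^[n - k] reflIndicator)
        simp only [triOp, smul_eq_mul]
        rcases lt_or_gt_of_ne hh with hneg | hpos'
        · have h1 : (h : ℝ) ≤ -1 := by exact_mod_cast Int.le_sub_one_of_lt hneg
          push_cast
          rw [abs_of_nonpos (by linarith : (h : ℝ) - 1 ≤ 0),
            abs_of_nonpos (by linarith : (h : ℝ) ≤ 0),
            abs_of_nonpos (by linarith : (h : ℝ) + 1 ≤ 0), ha, hb,
            show -((h : ℝ) - 1) = -h + 1 by ring, show -((h : ℝ) + 1) = -h - 1 by ring]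
          ring
        · have h1 : (1 : ℝ) ≤ h := by exact_mod_cast hpos'
          push_cast
          rw [abs_of_nonneg (by linarith : 0 ≤ (h : ℝ) - 1),
            abs_of_nonneg (by linarith : 0 ≤ (h : ℝ)),
            abs_of_nonneg (by linarith : 0 ≤ (h : ℝ) + 1), ha, hb]
          ring
      · simp only [if_neg hk, mul_zero, add_zero]
        split_ifs with hk'
        · rw [show n + 1 - k = 0 by omega, Function.iterate_zero, id_eq,
            triOp_iterate_of_pos _ _ _ hpos, mul_zero]
        · rfl

lemma sum_walkRetW (pm p0 p1 : ℝ) (n K : ℕ) :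
    ∑ k ∈ Finset.range (K + 1), walkRetW pm p0 p1 n k =
      (pm + p0 + p1) ^ n - visitW pm p0 p1 n 0 (K + 1) := by
  rw [← sum_walkWeight, eq_sub_iff_add_eq]
  simp only [walkRetW, visitW, Finset.sum_filter]
  rw [Finset.sum_comm, ← Finset.sum_add_distrib]
  refine Finset.sum_congr rfl fun w _ => ?_
  rw [visits_zero_eq, Finset.sum_ite_eq]
  by_cases hw : retZero w ≤ K
  · simp [hw]
  · simp [hw, not_le.1 hw]

/-! ### Laws of sums of independent steps -/

open MeasureTheory ProbabilityTheory Filter Topology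

/-- The law of `X + ξ`, where `X` has law `μ` and `ξ` is an independent step equal to
`-1, 0, 1` with probabilities `a, b, c`. -/
noncomputable def triPush (a b c : ℝ) (μ : Measure ℝ) : Measure ℝ :=
  ENNReal.ofReal a • μ.map (· - 1) + ENNReal.ofReal b • μ + ENNReal.ofReal c • μ.map (· + 1)

lemma isProbabilityMeasure_triPush {a b c : ℝ} (ha : 0 ≤ a) (hb : 0 ≤ b) (hc : 0 ≤ c)
    (h : a + b + c = 1) (μ : Measure ℝ) [IsProbabilityMeasure μ] :
    IsProbabilityMeasure (triPush a b c μ) := by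
  refine ⟨?_⟩
  have h1 : μ.map (· - 1) Set.univ = 1 := by
    rw [Measure.map_apply (by fun_prop) MeasurableSet.univ]; simp
  have h2 : μ.map (· + 1) Set.univ = 1 := by
    rw [Measure.map_apply (by fun_prop) MeasurableSet.univ]; simp
  simp only [triPush, Measure.add_apply, Measure.smul_apply, h1, h2, measure_univ, smul_eq_mul,
    mul_one]
  rw [← ENNReal.ofReal_add ha hb, ← ENNReal.ofReal_add (add_nonneg ha hb) hc, h,
    ENNReal.ofReal_one]

lemma isProbabilityMeasure_triPush_iterate {a b c : ℝ} (ha : 0 ≤ a) (hb : 0 ≤ b) (hc : 0 ≤ c)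
    (h : a + b + c = 1) (n : ℕ) (μ : Measure ℝ) [IsProbabilityMeasure μ] :
    IsProbabilityMeasure ((triPush a b c)^[n] μ) := by
  induction n with
  | zero => assumption
  | succ n ih =>
    rw [Function.iterate_succ_apply']
    exact isProbabilityMeasure_triPush ha hb hc h _

section Integral

variable {E : Type*} [NormedAddCommGroup E] [NormedSpace ℝ E]

lemma stronglyMeasurable_triOp (a b c : ℝ) {F : ℝ → E} (hF : StronglyMeasurable F) :
    StronglyMeasurable (triOp a b c F) :=
  (((hF.comp_measurable (measurable_id.sub_const 1)).const_smul a).add (hF.const_smul b)).add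
    ((hF.comp_measurable (measurable_id.add_const 1)).const_smul c)

lemma bounded_triOp (a b c : ℝ) {F : ℝ → E} (hF : ∃ C, ∀ y, ‖F y‖ ≤ C) :
    ∃ C, ∀ y, ‖triOp a b c F y‖ ≤ C := by
  obtain ⟨C, hC⟩ := hF
  refine ⟨‖a‖ * C + ‖b‖ * C + ‖c‖ * C, fun y => (norm_add₃_le).trans ?_⟩
  simp only [norm_smul]
  gcongr <;> exact hC _

lemma integral_triPush {a b c : ℝ} (ha : 0 ≤ a) (hb : 0 ≤ b) (hc : 0 ≤ c)
    (μ : Measure ℝ) [IsFiniteMeasure μ] {F : ℝ → E} (hF : StronglyMeasurable F)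
    (hF' : ∃ C, ∀ y, ‖F y‖ ≤ C) :
    ∫ y, F y ∂(triPush a b c μ) = ∫ y, triOp a b c F y ∂μ := by
  obtain ⟨C, hC⟩ := hF'
  have hint (ν : Measure ℝ) [IsFiniteMeasure ν] {G : ℝ → ℝ} (hG : Measurable G) :
      Integrable (fun y => F (G y)) ν :=
    Integrable.of_bound (hF.comp_measurable hG).aestronglyMeasurable C (ae_of_all _ fun _ => hC _)
  have hsub := hint μ (measurable_id.sub_const 1)
  have hadd := hint μ (measurable_id.add_const 1)
  have hid := hint μ measurable_id
  simp only [id_eq] at hsub hadd hid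
  rw [triPush, integral_add_measure, integral_add_measure, integral_smul_measure,
    integral_smul_measure, integral_smul_measure, integral_map (by fun_prop)
    hF.aestronglyMeasurable, integral_map (by fun_prop) hF.aestronglyMeasurable,
    ENNReal.toReal_ofReal ha, ENNReal.toReal_ofReal hb, ENNReal.toReal_ofReal hc]
  · simp only [triOp]
    rw [integral_add, integral_add, integral_smul, integral_smul, integral_smul]
    · exact hsub.smul a
    · exact hid.smul b
    · exact (hsub.smul a).add (hid.smul b)
    · exact hadd.smul c
  · exact (hint (μ.map (· - 1)) measurable_id).smul_measure ENNReal.ofReal_ne_top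
  · exact hid.smul_measure ENNReal.ofReal_ne_top
  · exact ((hint (μ.map (· - 1)) measurable_id).smul_measure ENNReal.ofReal_ne_top).add_measure
      (hid.smul_measure ENNReal.ofReal_ne_top)
  · exact (hint (μ.map (· + 1)) measurable_id).smul_measure ENNReal.ofReal_ne_top

lemma integral_triPush_iterate {a b c : ℝ} (ha : 0 ≤ a) (hb : 0 ≤ b) (hc : 0 ≤ c)
    (h : a + b + c = 1) (n : ℕ) (μ : Measure ℝ) [IsProbabilityMeasure μ] {F : ℝ → E}
    (hF : StronglyMeasurable F) (hF' : ∃ C, ∀ y, ‖F y‖ ≤ C) :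
    ∫ y, F y ∂((triPush a b c)^[n] μ) = ∫ y, (triOp a b c)^[n] F y ∂μ := by
  induction n generalizing F with
  | zero => rfl
  | succ n ih =>
    have := isProbabilityMeasure_triPush_iterate ha hb hc h n μ
    rw [Function.iterate_succ_apply', integral_triPush ha hb hc _ hF hF',
      ih (stronglyMeasurable_triOp a b c hF) (bounded_triOp a b c hF'),
      ← Function.iterate_succ_apply]

lemma stronglyMeasurable_triOp_iterate (a b c : ℝ) (n : ℕ) {F : ℝ → E}
    (hF : StronglyMeasurable F) : StronglyMeasurable ((triOp a b c)^[n] F) := by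
  induction n with
  | zero => exact hF
  | succ n ih =>
    rw [Function.iterate_succ_apply']
    exact stronglyMeasurable_triOp a b c ih

lemma bounded_triOp_iterate (a b c : ℝ) (n : ℕ) {F : ℝ → E} (hF : ∃ C, ∀ y, ‖F y‖ ≤ C) :
    ∃ C, ∀ y, ‖(triOp a b c)^[n] F y‖ ≤ C := by
  induction n with
  | zero => exact hF
  | succ n ih =>
    rw [Function.iterate_succ_apply']
    exact bounded_triOp a b c ih

end Integral

lemma charFun_triPush_iterate {a b c : ℝ} (ha : 0 ≤ a) (hb : 0 ≤ b) (hc : 0 ≤ c)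
    (h : a + b + c = 1) (n : ℕ) (μ : Measure ℝ) [IsProbabilityMeasure μ] (t : ℝ) :
    charFun ((triPush a b c)^[n] μ) t =
      (a * Complex.exp (-t * Complex.I) + b + c * Complex.exp (t * Complex.I)) ^ n *
        charFun μ t := by
  induction n with
  | zero => simp
  | succ n ih =>
    have := isProbabilityMeasure_triPush_iterate ha hb hc h n μ
    rw [Function.iterate_succ_apply', pow_succ', mul_assoc, ← ih, charFun_apply_real,
      charFun_apply_real, integral_triPush ha hb hc, ← integral_const_mul]
    · congr 1 with y
      simp only [triOp, Complex.real_smul]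
      push_cast
      rw [show (t : ℂ) * (y - 1) * Complex.I = -t * Complex.I + t * y * Complex.I by ring,
        show (t : ℂ) * (y + 1) * Complex.I = t * Complex.I + t * y * Complex.I by ring,
        Complex.exp_add, Complex.exp_add]
      ring
    · exact Continuous.stronglyMeasurable (by fun_prop)
    · refine ⟨1, fun y => ?_⟩
      rw [← Complex.ofReal_mul, Complex.norm_exp_ofReal_mul_I]

/-- Law of the sum of `k` independent steps with probabilities `(0, b, 2a)` and `N` independent
steps with probabilities `(a, b, a)`. -/
noncomputable def mixedLaw (a b : ℝ) (k N : ℕ) : Measure ℝ :=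
  (triPush a b a)^[N] ((triPush 0 b (2 * a))^[k] (Measure.dirac 0))

section MixedLaw

variable {a b : ℝ}

lemma isProbabilityMeasure_mixedLaw (ha : 0 ≤ a) (hb : 0 ≤ b) (hab : 2 * a + b = 1) (k N : ℕ) :
    IsProbabilityMeasure (mixedLaw a b k N) := by
  have := isProbabilityMeasure_triPush_iterate le_rfl hb (mul_nonneg zero_le_two ha)
    (by linarith) k (Measure.dirac (0 : ℝ))
  exact isProbabilityMeasure_triPush_iterate ha hb ha (by linarith) N _

lemma integral_mixedLaw (ha : 0 ≤ a) (hb : 0 ≤ b) (hab : 2 * a + b = 1) (k N : ℕ)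
    {F : ℝ → ℝ} (hF : StronglyMeasurable F) (hF' : ∃ C, ∀ y, ‖F y‖ ≤ C) :
    ∫ y, F y ∂(mixedLaw a b k N) = (triOp 0 b (2 * a))^[k] ((triOp a b a)^[N] F) 0 := by
  have := isProbabilityMeasure_triPush_iterate le_rfl hb (mul_nonneg zero_le_two ha)
    (by linarith) k (Measure.dirac (0 : ℝ))
  rw [mixedLaw, integral_triPush_iterate ha hb ha (by linarith) N _ hF hF',
    integral_triPush_iterate le_rfl hb (mul_nonneg zero_le_two ha) (by linarith) k _
      (stronglyMeasurable_triOp_iterate _ _ _ _ hF) (bounded_triOp_iterate _ _ _ _ hF'),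
    integral_dirac]

lemma charFun_mixedLaw (ha : 0 ≤ a) (hb : 0 ≤ b) (hab : 2 * a + b = 1) (k N : ℕ) (s : ℝ) :
    charFun (mixedLaw a b k N) s =
      (1 + 2 * a * (Complex.cos s - 1)) ^ N *
        (1 + 2 * a * (Complex.exp (s * Complex.I) - 1)) ^ k := by
  have := isProbabilityMeasure_triPush_iterate le_rfl hb (mul_nonneg zero_le_two ha)
    (by linarith) k (Measure.dirac (0 : ℝ))
  have hb' : (b : ℂ) = 1 - 2 * a := by
    have : b = 1 - 2 * a := by linarith
    rw [this]; push_cast; ring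
  rw [mixedLaw, charFun_triPush_iterate ha hb ha (by linarith),
    charFun_triPush_iterate le_rfl hb (mul_nonneg zero_le_two ha) (by linarith), charFun_dirac,
    hb', Complex.cos]
  simp only [inner_zero_left, Complex.ofReal_zero, zero_mul, Complex.exp_zero, mul_one, zero_add]
  push_cast
  congr 2 <;> ring

lemma integral_reflIndicator_mixedLaw (ha : 0 ≤ a) (hb : 0 ≤ b) (hab : 2 * a + b = 1)
    (k N : ℕ) {c : ℝ} (hc : 0 < c) :
    (triOp 0 b (2 * a))^[k] ((triOp a b a)^[N] reflIndicator) 0 =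
      ((mixedLaw a b k N).map (c * ·)).real (Set.Iic 0) +
        ((mixedLaw a b k N).map (c * ·)).real (Set.Iio 0) := by
  have := isProbabilityMeasure_mixedLaw ha hb hab k N
  have hm1 : StronglyMeasurable ((Set.Iic (0 : ℝ)).indicator (1 : ℝ → ℝ)) :=
    stronglyMeasurable_one.indicator measurableSet_Iic
  have hm2 : StronglyMeasurable ((Set.Iio (0 : ℝ)).indicator (1 : ℝ → ℝ)) :=
    stronglyMeasurable_one.indicator measurableSet_Iio
  have hI : (c * ·) ⁻¹' Set.Iic (0 : ℝ) = Set.Iic 0 := by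
    ext y; simp [hc]
  have hI' : (c * ·) ⁻¹' Set.Iio (0 : ℝ) = Set.Iio 0 := by
    ext y; simp [hc]
  rw [← integral_mixedLaw ha hb hab, map_measureReal_apply (by fun_prop) measurableSet_Iic,
    map_measureReal_apply (by fun_prop) measurableSet_Iio, hI, hI',
    ← integral_indicator_one measurableSet_Iic, ← integral_indicator_one measurableSet_Iio,
    ← integral_add]
  · rfl
  · exact (integrable_const (1 : ℝ)).indicator measurableSet_Iic
  · exact (integrable_const (1 : ℝ)).indicator measurableSet_Iio
  · exact hm1.add hm2
  · refine ⟨2, fun y => ?_⟩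
    rcases lt_trichotomy y 0 with h | rfl | h
    · simp [reflIndicator, h, h.le]; norm_num
    · simp [reflIndicator_zero]
    · simp [reflIndicator_of_pos h]

/-! ### Limit of the characteristic functions -/

lemma tendsto_one_add_pow_exp {g : ℕ → ℂ} {k : ℕ → ℕ} {z : ℂ} (hg : Tendsto g atTop (𝓝 0))
    (hk : Tendsto (fun n => (k n : ℂ) * g n) atTop (𝓝 z)) :
    Tendsto (fun n => (1 + g n) ^ k n) atTop (𝓝 (Complex.exp z)) := by
  have hd : HasDerivAt (fun w : ℂ => Complex.log (1 + w)) 1 0 := by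
    have := (((hasDerivAt_id (0 : ℂ)).const_add 1).clog (by simp))
    simpa using this
  have hc : Tendsto (fun n => dslope (fun w : ℂ => Complex.log (1 + w)) 0 (g n)) atTop (𝓝 1) := by
    have := (continuousAt_dslope_same.2 hd.differentiableAt).tendsto.comp hg
    rwa [dslope_same, hd.deriv] at this
  have hlim := (Complex.continuous_exp.tendsto _).comp (hk.mul hc)
  rw [mul_one] at hlim
  refine hlim.congr' ?_
  have hne : ∀ᶠ n in atTop, 1 + g n ≠ 0 := by
    have : Tendsto (fun n => 1 + g n) atTop (𝓝 (1 + 0)) := hg.const_add 1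
    exact this.eventually_ne (by simp)
  filter_upwards [hne] with n hn
  have := sub_smul_dslope (fun w : ℂ => Complex.log (1 + w)) 0 (g n)
  simp only [sub_zero, smul_eq_mul, add_zero, Complex.log_one] at this
  rw [Function.comp_apply, mul_assoc, this, Complex.exp_nat_mul, Complex.exp_log hn]

lemma cos_sub_one_eq_sinc (s : ℝ) : Real.cos s - 1 = -(s ^ 2 * Real.sinc (s / 2) ^ 2 / 2) := by
  rcases eq_or_ne s 0 with rfl | hs
  · simp
  · have h := Real.cos_sq' (s / 2)
    rw [Real.cos_sq, mul_div_cancel₀ s two_ne_zero] at h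
    rw [Real.sinc_of_ne_zero (by positivity)]
    field_simp
    linarith

lemma tendsto_charFun_mixedLaw (ha : 0 < a) (hb : 0 ≤ b) (hab : 2 * a + b = 1)
    {k N : ℕ → ℕ} {x : ℝ} (hk : Tendsto (fun n => (k n : ℝ) / √n) atTop (𝓝 x))
    (hN : Tendsto (fun n => (N n : ℝ) / n) atTop (𝓝 1)) (t : ℝ) :
    Tendsto (fun n : ℕ =>
        charFun ((mixedLaw a b (k n) (N n)).map ((2 * a * √n)⁻¹ * ·)) t) atTop
      (𝓝 (charFun (gaussianReal x (Real.toNNReal (2 * a)⁻¹)) t)) := by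
  have hsqrt : Tendsto (fun n : ℕ => √(n : ℝ)) atTop atTop :=
    Real.tendsto_sqrt_atTop.comp tendsto_natCast_atTop_atTop
  have hs : Tendsto (fun n : ℕ => (2 * a * √n)⁻¹ * t) atTop (𝓝 0) := by
    have := (tendsto_inv_atTop_zero.comp (hsqrt.const_mul_atTop (by positivity : 0 < 2 * a)))
    simpa using this.mul_const t
  have hcos : Tendsto (fun n : ℕ => 2 * a * (Real.cos ((2 * a * √n)⁻¹ * t) - 1)) atTop (𝓝 0) := by
    have := (((Real.continuous_cos.tendsto 0).comp hs).sub_const 1).const_mul (2 * a)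
    simpa using this
  have hexp : Tendsto (fun n : ℕ => Complex.exp (((2 * a * √n)⁻¹ * t : ℝ) * Complex.I))
      atTop (𝓝 1) := by
    have hcont : Continuous fun s : ℝ => Complex.exp (s * Complex.I) := by fun_prop
    have := (hcont.tendsto 0).comp hs
    simpa [Function.comp_def] using this
  have hpos : ∀ᶠ n : ℕ in atTop, 0 < √(n : ℝ) := hsqrt.eventually_gt_atTop 0
  simp_rw [charFun_map_mul, charFun_mixedLaw ha.le hb hab]
  have hlim : charFun (gaussianReal x (Real.toNNReal (2 * a)⁻¹)) t =
      Complex.exp ((-(t ^ 2 * (2 * a)⁻¹ / 2) : ℝ)) *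
        Complex.exp (x * t * Complex.I) := by
    rw [charFun_gaussianReal, ← Complex.exp_add, Real.coe_toNNReal _ (by positivity)]
    congr 1
    push_cast
    ring
  rw [hlim]
  refine Tendsto.mul (tendsto_one_add_pow_exp ?_ ?_) (tendsto_one_add_pow_exp ?_ ?_)
  · have := (Complex.continuous_ofReal.tendsto 0).comp hcos
    simpa [Function.comp_def] using this
  · have hsinc : Tendsto (fun n : ℕ => Real.sinc ((2 * a * √n)⁻¹ * t / 2)) atTop (𝓝 1) := by
      have := (Real.continuous_sinc.tendsto 0).comp (by simpa using hs.div_const 2)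
      simpa [Function.comp_def] using this
    have hreal : Tendsto (fun n : ℕ => (N n : ℝ) * (2 * a * (Real.cos ((2 * a * √n)⁻¹ * t) - 1)))
        atTop (𝓝 (-(t ^ 2 * (2 * a)⁻¹ / 2))) := by
      have := (hN.mul (hsinc.pow 2)).mul_const (-(t ^ 2 * (2 * a)⁻¹ / 2))
      simp only [one_pow, one_mul] at this
      refine this.congr' ?_
      filter_upwards [hpos] with n hn
      rw [cos_sub_one_eq_sinc]
      have hn2 : (n : ℝ) = √n ^ 2 := (Real.sq_sqrt n.cast_nonneg).symm
      generalize Real.sinc ((2 * a * √n)⁻¹ * t / 2) = S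
      rw [hn2, Real.sqrt_sq hn.le]
      field_simp
    have := (Complex.continuous_ofReal.tendsto _).comp hreal
    simpa [Function.comp_def] using this
  · have := (hexp.sub_const 1).const_mul (2 * a : ℂ)
    simpa using this
  · have hd : HasDerivAt (fun s : ℝ => Complex.exp (s * Complex.I)) Complex.I 0 := by
      have := ((Complex.ofRealCLM.hasDerivAt (x := (0 : ℝ))).mul_const Complex.I).cexp
      simpa using this
    have hc : Tendsto (fun n : ℕ => dslope (fun s : ℝ => Complex.exp (s * Complex.I)) 0
        ((2 * a * √n)⁻¹ * t)) atTop (𝓝 Complex.I) := by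
      have := (continuousAt_dslope_same.2 hd.differentiableAt).tendsto.comp hs
      rwa [dslope_same, hd.deriv] at this
    have hk' : Tendsto (fun n : ℕ => ((k n / √n * t : ℝ) : ℂ)) atTop (𝓝 ((x * t : ℝ) : ℂ)) :=
      (Complex.continuous_ofReal.tendsto _).comp (hk.mul_const t)
    have := hk'.mul hc
    rw [Complex.ofReal_mul] at this
    refine this.congr' ?_
    filter_upwards [hpos] with n hn
    have hsl := sub_smul_dslope (fun s : ℝ => Complex.exp (s * Complex.I)) 0
      ((2 * a * √n)⁻¹ * t)
    simp only [sub_zero, Complex.ofReal_zero, zero_mul, Complex.exp_zero] at hsl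
    rw [← hsl, Complex.real_smul]
    generalize dslope (fun s : ℝ => Complex.exp (s * Complex.I)) 0 ((2 * a * √n)⁻¹ * t) = D
    have hne : (√n : ℂ) ≠ 0 := by exact_mod_cast hn.ne'
    have hne' : (a : ℂ) ≠ 0 := by exact_mod_cast ha.ne'
    push_cast
    field_simp

lemma tendsto_mixedLaw_real (ha : 0 < a) (hb : 0 ≤ b) (hab : 2 * a + b = 1)
    {k N : ℕ → ℕ} {x : ℝ} (hk : Tendsto (fun n => (k n : ℝ) / √n) atTop (𝓝 x))
    (hN : Tendsto (fun n => (N n : ℝ) / n) atTop (𝓝 1)) {s : Set ℝ} (hs : frontier s = {0}) :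
    Tendsto (fun n : ℕ =>
        ((mixedLaw a b (k n) (N n)).map ((2 * a * √n)⁻¹ * ·)).real s) atTop
      (𝓝 ((gaussianReal x (Real.toNNReal (2 * a)⁻¹)).real s)) := by
  have hprob (n : ℕ) :
      IsProbabilityMeasure ((mixedLaw a b (k n) (N n)).map ((2 * a * √n)⁻¹ * ·)) := by
    have := isProbabilityMeasure_mixedLaw ha.le hb hab (k n) (N n)
    exact Measure.isProbabilityMeasure_map (by fun_prop)
  let μ (n : ℕ) : ProbabilityMeasure ℝ :=
    ⟨(mixedLaw a b (k n) (N n)).map ((2 * a * √n)⁻¹ * ·), hprob n⟩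
  let γ : ProbabilityMeasure ℝ := ⟨gaussianReal x (Real.toNNReal (2 * a)⁻¹), inferInstance⟩
  have hμ : Tendsto μ atTop (𝓝 γ) :=
    ProbabilityMeasure.tendsto_iff_tendsto_charFun.2 (tendsto_charFun_mixedLaw ha hb hab hk hN)
  have hv : Real.toNNReal (2 * a)⁻¹ ≠ 0 := by
    rw [ne_eq, Real.toNNReal_eq_zero, not_le]; positivity
  have := nullSingletonClass_gaussianReal (μ := x) hv
  have hγ : (γ : Measure ℝ) (frontier s) = 0 := by
    rw [hs]; exact measure_singleton (μ := gaussianReal x _) 0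
  exact (ENNReal.tendsto_toReal (measure_ne_top _ _)).comp
    (ProbabilityMeasure.tendsto_measure_of_null_frontier_of_tendsto' hμ hγ)

end MixedLaw

lemma one_sub_gaussianReal_eq_integral {v : NNReal} (hv : v ≠ 0) {x : ℝ} (hx : 0 ≤ x) :
    1 - ((gaussianReal x v).real (Set.Iic 0) + (gaussianReal x v).real (Set.Iio 0)) =
      ∫ t in (0 : ℝ)..x, √(2 / (Real.pi * v)) * Real.exp (-t ^ 2 / (2 * v)) := by
  have hmap : (gaussianReal 0 v).map (fun y => x - y) = gaussianReal x v := by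
    rw [gaussianReal_map_const_sub, sub_zero]
  have hneg : (gaussianReal 0 v).map (fun y => -y) = gaussianReal 0 v := by
    rw [gaussianReal_map_neg, neg_zero]
  have h1 : (gaussianReal x v).real (Set.Iic 0) = (gaussianReal 0 v).real (Set.Iic (-x)) := by
    rw [← hmap, map_measureReal_apply (by fun_prop) measurableSet_Iic]
    nth_rw 2 [← hneg]
    rw [map_measureReal_apply (by fun_prop) measurableSet_Iic]
    congr 1
    ext y; simp
  have h2 : (gaussianReal x v).real (Set.Iio 0) = (gaussianReal 0 v).real (Set.Ioi x) := by
    rw [← hmap, map_measureReal_apply (by fun_prop) measurableSet_Iio]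
    congr 1
    ext y; simp
  have h3 : (gaussianReal 0 v).real (Set.Iic (-x)) + (gaussianReal 0 v).real (Set.Ioc (-x) x) =
      (gaussianReal 0 v).real (Set.Iic x) := by
    rw [← measureReal_union (Set.Iic_disjoint_Ioc le_rfl) measurableSet_Ioc,
      Set.Iic_union_Ioc_eq_Iic (by linarith)]
  have h4 : (gaussianReal 0 v).real (Set.Iic x) + (gaussianReal 0 v).real (Set.Ioi x) = 1 := by
    rw [← Set.compl_Iic, probReal_add_probReal_compl measurableSet_Iic]
  have h5 : (gaussianReal 0 v).real (Set.Ioc (-x) x) = ∫ t in (-x)..x, gaussianPDFReal 0 v t := by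
    rw [measureReal_def, gaussianReal_apply_eq_integral _ hv, ENNReal.toReal_ofReal,
      intervalIntegral.integral_of_le (by linarith)]
    exact integral_nonneg (gaussianPDFReal_nonneg _ _)
  have hint (c d : ℝ) : IntervalIntegrable (gaussianPDFReal 0 v) volume c d :=
    (integrable_gaussianPDFReal 0 v).intervalIntegrable
  have h6 : ∫ t in (-x)..0, gaussianPDFReal 0 v t = ∫ t in (0 : ℝ)..x, gaussianPDFReal 0 v t := by
    have := intervalIntegral.integral_comp_neg (a := 0) (b := x) (gaussianPDFReal 0 v)
    rw [neg_zero] at this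
    rw [← this]
    simp [gaussianPDFReal]
  rw [h1, h2, show 1 - ((gaussianReal 0 v).real (Set.Iic (-x)) +
    (gaussianReal 0 v).real (Set.Ioi x)) = (gaussianReal 0 v).real (Set.Ioc (-x) x) by linarith,
    h5, ← intervalIntegral.integral_add_adjacent_intervals (hint (-x) 0) (hint 0 x), h6,
    ← two_mul, ← intervalIntegral.integral_const_mul]
  congr 1 with t
  have hv' : (0 : ℝ) < v := by positivity
  have : √(2 / (Real.pi * v)) = 2 * (√(2 * Real.pi * v))⁻¹ := by
    rw [← Real.sqrt_inv, Real.sqrt_eq_iff_mul_self_eq (by positivity) (by positivity),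
      mul_mul_mul_comm, Real.mul_self_sqrt (by positivity)]
    field_simp
  rw [gaussianPDFReal, this, sub_zero, ← mul_assoc 2]

lemma tendsto_floor_mul_sqrt_div (x : ℝ) (hx : 0 ≤ x) :
    Tendsto (fun n : ℕ => ((⌊x * √n⌋₊ + 1 : ℕ) : ℝ) / √n) atTop (𝓝 x) := by
  have hsqrt : Tendsto (fun n : ℕ => √(n : ℝ)) atTop atTop :=
    Real.tendsto_sqrt_atTop.comp tendsto_natCast_atTop_atTop
  have h1 := (tendsto_nat_floor_mul_div_atTop hx).comp hsqrt
  have h2 := tendsto_inv_atTop_zero.comp hsqrt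
  have := h1.add h2
  rw [add_zero] at this
  refine this.congr fun n => ?_
  simp only [Function.comp_apply]
  push_cast
  rw [add_div, one_div]

/-- **Limit law for returns to zero, zero drift**: `X_n/√n` converges in distribution
to the half-normal law `H(σ)` with `σ = √(P(1)/P″(1))`. -/
theorem returns_to_zero_half_normal (pm p0 p1 : ℝ)
    (hpm : 0 < pm) (hp0 : 0 < p0) (hp1 : 0 < p1) (hdrift : p1 = pm) :
    let P1 : ℝ := pm + p0 + p1
    let σ : ℝ := Real.sqrt (P1 / (2 * pm))
    ∀ x : ℝ, 0 ≤ x →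
      Filter.Tendsto
        (fun n : ℕ =>
          (∑ k ∈ Finset.range (⌊x * Real.sqrt n⌋₊ + 1), walkRetW pm p0 p1 n k) / P1 ^ n)
        Filter.atTop
        (nhds (∫ t in (0:ℝ)..x,
          Real.sqrt (2 / (Real.pi * σ ^ 2)) * Real.exp (-t ^ 2 / (2 * σ ^ 2)))) := by
  intro P1 σ x hx
  subst hdrift
  have hP : 0 < P1 := by positivity
  set a : ℝ := p1 / P1 with ha_def
  set b : ℝ := p0 / P1 with hb_def
  have ha : 0 < a := by positivity
  have hb : 0 ≤ b := by positivity
  have hab : 2 * a + b = 1 := by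
    rw [ha_def, hb_def]
    field_simp
    simp only [P1]
    ring
  have hσ : σ ^ 2 = (2 * a)⁻¹ := by
    rw [Real.sq_sqrt (by positivity), ha_def]
    field_simp
  set k : ℕ → ℕ := fun n => ⌊x * √n⌋₊ + 1
  have hk := tendsto_floor_mul_sqrt_div x hx
  have hkn : Tendsto (fun n : ℕ => (k n : ℝ) / n) atTop (𝓝 0) := by
    have hsqrt : Tendsto (fun n : ℕ => √(n : ℝ)) atTop atTop :=
      Real.tendsto_sqrt_atTop.comp tendsto_natCast_atTop_atTop
    have := hk.mul (tendsto_inv_atTop_zero.comp hsqrt)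
    rw [mul_zero] at this
    refine this.congr fun n => ?_
    rw [Function.comp_apply, ← div_eq_mul_inv, div_div, Real.mul_self_sqrt n.cast_nonneg]
  have hle : ∀ᶠ n : ℕ in atTop, k n ≤ n := by
    filter_upwards [hkn.eventually_lt_const one_pos, eventually_gt_atTop 0] with n hn hn0
    rw [div_lt_one (by exact_mod_cast hn0)] at hn
    exact_mod_cast hn.le
  have hN : Tendsto (fun n : ℕ => ((n - k n : ℕ) : ℝ) / n) atTop (𝓝 1) := by
    have := hkn.const_sub 1
    rw [sub_zero] at this
    refine this.congr' ?_
    filter_upwards [hle, eventually_gt_atTop 0] with n hn hn0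
    have : (n : ℝ) ≠ 0 := by exact_mod_cast hn0.ne'
    rw [Nat.cast_sub hn, sub_div, div_self this]
  have hlim := ((tendsto_mixedLaw_real ha hb hab hk hN (frontier_Iic (a := (0 : ℝ)))).add
    (tendsto_mixedLaw_real ha hb hab hk hN (frontier_Iio (a := (0 : ℝ))))).const_sub 1
  have hv : Real.toNNReal (2 * a)⁻¹ ≠ 0 := by
    rw [ne_eq, Real.toNNReal_eq_zero, not_le]; positivity
  rw [one_sub_gaussianReal_eq_integral hv hx, Real.coe_toNNReal _ (by positivity), ← hσ] at hlim
  refine hlim.congr' ?_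
  filter_upwards [hle, eventually_gt_atTop 0] with n hn hn0
  have hc : 0 < (2 * a * √n)⁻¹ := by
    have : (0 : ℝ) < n := by exact_mod_cast hn0
    positivity
  have hPn : P1 ^ n ≠ 0 := by positivity
  rw [← integral_reflIndicator_mixedLaw ha.le hb hab _ _ hc, sum_walkRetW,
    visitW_eq hab P1 p1 p0 (mul_div_cancel₀ _ hP.ne').symm (mul_div_cancel₀ _ hP.ne').symm,
    if_pos hn, Int.cast_zero, abs_zero, sub_div, div_self hPn, mul_div_cancel_left₀ _ hPn]
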